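/- The cyclic family of holographic entropy inequalities: let n ≥ 2 and let a, b be integers with a > b ≥ 0 and a + b ≤ n. Then for every graph model on n regions, C_n(a) − C_n(b) ≥ S*({1,…,n}); equivalently, Σ_{i=1}^n [ S*({i+1,…,i+a}) − S*({i+1,…,i+b}) ] ≥ S*({1,…,n}), with all indices taken modulo n. -/

import Mathlib

open Classical

/-- A *graph model* on `n` regions: a finite graph with symmetric nonnegative edge
weights `w` (weight `0` meaning "no edge") and a partial coloring of the vertices by
the `n+1` boundary colors; `color v = none` means `v` is a bulk vertex, color
`Fin.castSucc i` represents boundary region `i ∈ {1,…,n}` and color `Fin.last n`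
represents the purifying region `n+1`. -/
structure GraphModel (n : ℕ) where
  V : Type
  [fintypeV : Fintype V]
  w : V → V → ℝ
  symm : ∀ u v, w u v = w v u
  nonneg : ∀ u v, 0 ≤ w u v
  color : V → Option (Fin (n + 1))

attribute [instance] GraphModel.fintypeV

/-- `|C(W)|`: the total weight of the edges with exactly one endpoint in `W`
(each unordered crossing edge `{u,v}` is counted exactly once, via its ordering
with `u ∈ W` and `v ∉ W`). -/
noncomputable def GraphModel.cutWeight {n : ℕ} (G : GraphModel n) (W : Set G.V) : ℝ :=
  ∑ u : G.V, ∑ v : G.V, if u ∈ W ∧ v ∉ W then G.w u v else 0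

/-- `W` is an `I`-cut: `W` contains precisely the boundary vertices whose color lies
in `I ⊆ {1,…,n}`. -/
def GraphModel.IsCut {n : ℕ} (G : GraphModel n) (I : Finset (Fin n)) (W : Set G.V) : Prop :=
  ∀ v c, G.color v = some c → (v ∈ W ↔ ∃ i ∈ I, Fin.castSucc i = c)

/-- The discrete entropy `S*(I)`: the minimal weight of an `I`-cut. -/
noncomputable def GraphModel.entropy {n : ℕ} (G : GraphModel n) (I : Finset (Fin n)) : ℝ :=
  sInf (G.cutWeight '' {W | G.IsCut I W})

/-- The holographic entropy vector of a graph model: the collection of all discrete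
entropies `S*(I)` of nonempty subsets `I ⊆ {1,…,n}`. -/
noncomputable def GraphModel.entropyVector {n : ℕ} (G : GraphModel n)
    (I : {I : Finset (Fin n) // I.Nonempty}) : ℝ :=
  G.entropy I.1

/-- The cyclic window of `a` consecutive regions starting at `i` (indices mod `n`);
summing over all `i` this gives the windows `{i+1,…,i+a}` of the paper. -/
noncomputable def cycWindow (n i a : ℕ) : Finset (Fin n) :=
  Finset.univ.filter fun j => ∃ t < a, (i + t) % n = (j : ℕ)

/-- `C_n(a) = Σ_{i=1}^n S({i+1,…,i+a})`: the cyclic sum of the entropies of all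
windows of `a` consecutive regions. -/
noncomputable def cycC {n : ℕ} (S : Finset (Fin n) → ℝ) (a : ℕ) : ℝ :=
  ∑ i ∈ Finset.range n, S (cycWindow n i a)

section EvenGaps

variable {M : Type*} [AddCommGroup M]

/-- Walking from `p` in steps of `σ`, the first point of `A` is met after `m ≥ 1` steps. -/
def IsGap (σ : M) (A : Set M) (p : M) (m : ℕ) : Prop :=
  0 < m ∧ p + m • σ ∈ A ∧ ∀ l, 0 < l → l < m → p + l • σ ∉ A

/-- The points of `A` from which the next point of `A` is an even number of steps away. -/
def evenGaps (σ : M) (A : Set M) : Set M :=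
  {p | p ∈ A ∧ ∃ m, Even m ∧ IsGap σ A p m}

/-- `evenGaps σ A`, with the extra point `none` recording whether `A` is nonempty. -/
def evenGapsOption (σ : M) (A : Set M) : Set (Option M) :=
  {o | o.elim A.Nonempty (· ∈ evenGaps σ A)}

theorem IsGap.unique {σ : M} {A : Set M} {p : M} {m m' : ℕ} (h : IsGap σ A p m)
    (h' : IsGap σ A p m') : m = m' := by
  rcases lt_trichotomy m m' with hl | hl | hl
  · exact absurd h.2.1 (h'.2.2 m h.1 hl)
  · exact hl
  · exact absurd h'.2.1 (h.2.2 m' h'.1 hl)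

theorem IsGap.mem_evenGaps_iff {σ : M} {A : Set M} {p : M} {m : ℕ} (h : IsGap σ A p m) :
    p ∈ evenGaps σ A ↔ p ∈ A ∧ Even m := by
  refine and_congr_right fun _ => ⟨?_, fun hm => ⟨m, hm, h⟩⟩
  rintro ⟨m', hm', h'⟩
  rwa [h.unique h']

theorem exists_isGap {σ : M} (hσ : ∀ x : M, ∃ m : ℕ, 0 < m ∧ m • σ = x) {A : Set M}
    (hA : A.Nonempty) (p : M) : ∃ m, IsGap σ A p m := by
  obtain ⟨a, ha⟩ := hA
  have hex : ∃ m : ℕ, 0 < m ∧ p + m • σ ∈ A := by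
    obtain ⟨m, hm, h⟩ := hσ (a - p)
    exact ⟨m, hm, by rw [h]; simpa using ha⟩
  exact ⟨Nat.find hex, (Nat.find_spec hex).1, (Nat.find_spec hex).2,
    fun l hl hlt hmem => Nat.find_min hex hlt ⟨hl, hmem⟩⟩

theorem IsGap.source_unique {σ : M} {A : Set M} {p p' : M} {m m' : ℕ} (hp : p ∈ A)
    (hp' : p' ∈ A) (h : IsGap σ A p m) (h' : IsGap σ A p' m')
    (he : p + m • σ = p' + m' • σ) : p = p' := by
  wlog hle : m ≤ m' generalizing p p' m m'
  · exact (this hp' hp h' h he.symm (by omega)).symm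
  obtain ⟨d, rfl⟩ := Nat.exists_eq_add_of_le hle
  have hpd : p = p' + d • σ := by
    rw [add_nsmul, add_comm (m • σ), ← add_assoc] at he
    exact add_right_cancel he
  rcases Nat.eq_zero_or_pos d with rfl | hd
  · simpa using hpd
  · exact absurd (hpd ▸ hp) (h'.2.2 d hd (by have := h.1; omega))

theorem exists_evenGaps_insert {σ : M} (hσ : ∀ x : M, ∃ m : ℕ, 0 < m ∧ m • σ = x) {A : Set M}
    (hA : A.Nonempty) {q : M} (hq : q ∉ A) :
    ∃ t, ∀ p, p ≠ t → (p ∈ evenGaps σ A ↔ p ∈ evenGaps σ (insert q A)) := by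
  obtain ⟨d, hd⟩ := exists_isGap hσ hA q
  have hqd : ∀ l, 0 < l → l < d → q + l • σ ≠ q := by
    intro l hl hld he
    refine hd.2.2 (d - l) (by omega) (by omega) ?_
    have h2 := hd.2.1
    rw [show d = l + (d - l) by omega, add_nsmul, ← add_assoc, he] at h2
    exact h2
  have hd' : IsGap σ (insert q A) q d :=
    ⟨hd.1, Or.inr hd.2.1, fun l hl hld h => h.elim (hqd l hl hld) (hd.2.2 l hl hld)⟩
  have hother : ∀ p m, p ∈ A → IsGap σ (insert q A) p m → p + m • σ ≠ q →
      (p ∈ evenGaps σ A ↔ p ∈ evenGaps σ (insert q A)) := by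
    intro p m hp hm hne
    have hm' : IsGap σ A p m :=
      ⟨hm.1, hm.2.1.resolve_left hne, fun l hl hlm h => hm.2.2 l hl hlm (Or.inr h)⟩
    rw [hm.mem_evenGaps_iff, hm'.mem_evenGaps_iff]
    simp [hp]
  have hprev : ∀ p m, p ∈ A → IsGap σ (insert q A) p m → p + m • σ = q →
      IsGap σ A p (m + d) := by
    intro p m hp hm he
    refine ⟨by have := hm.1; omega, by rw [add_nsmul, ← add_assoc, he]; exact hd.2.1, ?_⟩
    intro l hl hlm h
    rcases lt_trichotomy l m with hlt | rfl | hlt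
    · exact hm.2.2 l hl hlt (Or.inr h)
    · exact hq (he ▸ h)
    · refine hd.2.2 (l - m) (by omega) (by omega) ?_
      rw [show l = m + (l - m) by omega, add_nsmul, ← add_assoc, he] at h
      exact h
  have hnot : ∀ p, p ∉ A → p ≠ q →
      (p ∈ evenGaps σ A ↔ p ∈ evenGaps σ (insert q A)) := by
    intro p hp hpq
    exact iff_of_false (fun h => hp h.1) (fun h => h.1.elim hpq hp)
  have hins : (insert q A).Nonempty := Set.insert_nonempty q A
  by_cases hde : Even d
  · refine ⟨q, fun p hpq => ?_⟩
    by_cases hp : p ∈ A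
    · obtain ⟨m, hm⟩ := exists_isGap hσ hins p
      by_cases he : p + m • σ = q
      · rw [hm.mem_evenGaps_iff, (hprev p m hp hm he).mem_evenGaps_iff]
        simp [hp, Nat.even_add, hde]
      · exact hother p m hp hm he
    · exact hnot p hp hpq
  · by_cases hex : ∃ t m, t ∈ A ∧ IsGap σ (insert q A) t m ∧ t + m • σ = q
    · obtain ⟨t, mt, htA, htm, hte⟩ := hex
      refine ⟨t, fun p hpt => ?_⟩
      by_cases hp : p ∈ A
      · obtain ⟨m, hm⟩ := exists_isGap hσ hins p
        refine hother p m hp hm fun he => hpt ?_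
        exact IsGap.source_unique (Or.inr hp) (Or.inr htA) hm htm (he.trans hte.symm)
      · by_cases hpq : p = q
        · subst hpq
          rw [hd'.mem_evenGaps_iff]
          exact iff_of_false (fun h => hp h.1) (fun h => hde h.2)
        · exact hnot p hp hpq
    · refine ⟨q, fun p hpq => ?_⟩
      by_cases hp : p ∈ A
      · obtain ⟨m, hm⟩ := exists_isGap hσ hins p
        exact hother p m hp hm fun he => hex ⟨p, m, hp, hm, he⟩
      · exact hnot p hp hpq

theorem evenGaps_empty (σ : M) : evenGaps σ ∅ = ∅ := by
  ext
  simp [evenGaps]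

theorem evenGaps_singleton {σ : M} (hodd : ∀ m : ℕ, IsGap σ {0} 0 m → Odd m) (q : M) :
    evenGaps σ {q} = ∅ := by
  ext p
  simp only [Set.mem_empty_iff_false, iff_false]
  rintro ⟨rfl, m, hm, h⟩
  refine Nat.not_even_iff_odd.2 (hodd m ?_) hm
  simpa [IsGap] using h

theorem ncard_symmDiff_evenGapsOption_insert [Finite M] {σ : M}
    (hσ : ∀ x : M, ∃ m : ℕ, 0 < m ∧ m • σ = x)
    (hodd : ∀ m : ℕ, IsGap σ {0} 0 m → Odd m) (A : Set M) (q : M) (hq : q ∉ A) :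
    (symmDiff (evenGapsOption σ A) (evenGapsOption σ (insert q A))).ncard ≤ 1 := by
  suffices h : ∃ t, symmDiff (evenGapsOption σ A) (evenGapsOption σ (insert q A)) ⊆ {t} by
    obtain ⟨t, ht⟩ := h
    simpa using Set.ncard_le_ncard ht
  rcases A.eq_empty_or_nonempty with rfl | hA
  · refine ⟨none, ?_⟩
    rintro (_ | p) hp
    · rfl
    · simp [evenGapsOption, Set.mem_symmDiff, evenGaps_singleton hodd, evenGaps_empty] at hp
  · obtain ⟨t, ht⟩ := exists_evenGaps_insert hσ hA hq
    refine ⟨some t, ?_⟩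
    rintro (_ | p) hp
    · simp [evenGapsOption, Set.mem_symmDiff, hA] at hp
    · by_contra hne
      have := ht p (fun h => hne (by simp [h]))
      simp [evenGapsOption, Set.mem_symmDiff, this] at hp

end EvenGaps

theorem ncard_symmDiff_le_of_insert {α β : Type*} [Finite α] [Finite β] {f : Set α → Set β}
    (hf : ∀ A q, q ∉ A → (symmDiff (f A) (f (insert q A))).ncard ≤ 1) (A B : Set α) :
    (symmDiff (f A) (f B)).ncard ≤ (symmDiff A B).ncard := by
  induction hn : (symmDiff A B).ncard generalizing A with
  | zero =>
    have : symmDiff A B = ∅ := (Set.ncard_eq_zero (Set.toFinite _)).1 hn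
    rw [symmDiff_eq_bot.1 this]
    simp
  | succ k ih =>
    obtain ⟨q, hq⟩ : (symmDiff A B).Nonempty := by
      rw [Set.nonempty_iff_ne_empty]; rintro h; simp [h] at hn
    obtain ⟨A', hA', hstep⟩ : ∃ A' : Set α, symmDiff A' B = symmDiff A B \ {q} ∧
        (symmDiff (f A) (f A')).ncard ≤ 1 := by
      by_cases hqA : q ∈ A
      · refine ⟨A \ {q}, ?_, ?_⟩
        · ext x
          by_cases hx : x = q <;> simp_all [Set.mem_symmDiff]
        · have := hf (A \ {q}) q (by simp)
          rwa [Set.insert_sdiff_singleton, Set.insert_eq_of_mem hqA, symmDiff_comm] at this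
      · refine ⟨insert q A, ?_, hf A q hqA⟩
        ext x
        by_cases hx : x = q <;> simp_all [Set.mem_symmDiff]
    have hcard : (symmDiff A' B).ncard = k := by
      rw [hA', Set.ncard_sdiff_singleton_of_mem hq, hn]; rfl
    calc (symmDiff (f A) (f B)).ncard
        ≤ (symmDiff (f A) (f A') ∪ symmDiff (f A') (f B)).ncard :=
          Set.ncard_le_ncard (symmDiff_triangle _ _ _) (Set.toFinite _)
      _ ≤ (symmDiff (f A) (f A')).ncard + (symmDiff (f A') (f B)).ncard :=
          Set.ncard_union_le _ _
      _ ≤ k + 1 := by have := ih A' hcard; omega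

section Arcs

variable {k : ℕ}

theorem natCast_two_mul_add_one_self (k : ℕ) : (2 * k + 1 : ZMod (2 * k + 1)) = 0 := by
  exact_mod_cast ZMod.natCast_self (2 * k + 1)

theorem exists_pos_nsmul_natCast_eq (x : ZMod (2 * k + 1)) :
    ∃ m : ℕ, 0 < m ∧ m • (k : ZMod (2 * k + 1)) = x := by
  refine ⟨(-2 * x).val + (2 * k + 1), by omega, ?_⟩
  rw [nsmul_eq_mul, Nat.cast_add, ZMod.natCast_self, ZMod.natCast_zmod_val]
  linear_combination -x * natCast_two_mul_add_one_self k

theorem odd_of_isGap_singleton_zero {m : ℕ}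
    (h : IsGap (k : ZMod (2 * k + 1)) {0} 0 m) : Odd m := by
  obtain ⟨hpos, hm, hlt⟩ := h
  simp only [zero_add, Set.mem_singleton_iff, nsmul_eq_mul] at hm hlt
  have hle : m ≤ 2 * k + 1 := by
    by_contra! hgt
    exact hlt (2 * k + 1) (by omega) hgt (by rw [ZMod.natCast_self, zero_mul])
  have hz : (m : ZMod (2 * k + 1)) = 0 := by
    linear_combination (m : ZMod (2 * k + 1)) * natCast_two_mul_add_one_self k - 2 * hm
  have hdvd := (ZMod.natCast_eq_zero_iff m (2 * k + 1)).1 hz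
  have := Nat.le_of_dvd hpos hdvd
  exact ⟨k, by omega⟩

theorem mem_evenGaps_arc_iff (j p : ZMod (2 * k + 1)) :
    p ∈ evenGaps (k : ZMod (2 * k + 1)) {i | (j - i).val < k + 1} ↔ (j - p).val < k := by
  obtain ⟨r, hr, hrp⟩ : ∃ r : ℕ, r < 2 * k + 1 ∧ j - p = r :=
    ⟨(j - p).val, ZMod.val_lt _, (ZMod.natCast_zmod_val _).symm⟩
  have hval : ∀ (s : ℕ) (x : ZMod (2 * k + 1)), s < 2 * k + 1 → x = s → x.val = s := by
    rintro s _ hs rfl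
    exact ZMod.val_cast_of_lt hs
  have hN := natCast_two_mul_add_one_self k
  rw [hval r _ hr hrp]
  rcases lt_trichotomy r k with hlt | rfl | hgt
  · have hgap : IsGap (k : ZMod (2 * k + 1)) {i | (j - i).val < k + 1} p 2 := by
      refine ⟨by omega, ?_, ?_⟩
      · rw [Set.mem_ofPred_eq, hval (r + 1) _ (by omega)]
        · omega
        · push_cast
          rw [nsmul_eq_mul]
          push_cast
          linear_combination hrp - hN
      · intro l hl hl2
        obtain rfl : l = 1 := by omega
        rw [Set.mem_ofPred_eq, hval (r + k + 1) _ (by omega)]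
        · omega
        · push_cast
          rw [one_nsmul]
          linear_combination hrp - hN
    rw [hgap.mem_evenGaps_iff, Set.mem_ofPred_eq, hval r _ hr hrp]
    simp [hlt, hlt.trans (Nat.lt_succ_self k)]
  · have hgap : IsGap (r : ZMod (2 * r + 1)) {i | (j - i).val < r + 1} p 1 := by
      refine ⟨by omega, ?_, by omega⟩
      rw [Set.mem_ofPred_eq, hval 0 _ (by omega)]
      · omega
      · push_cast
        rw [one_nsmul]
        linear_combination hrp
    rw [hgap.mem_evenGaps_iff]
    simp
  · refine iff_of_false (fun h => ?_) (by omega)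
    have := h.1
    rw [Set.mem_ofPred_eq, hval r _ hr hrp] at this
    omega

end Arcs

namespace GraphModel

variable {n : ℕ} (G : GraphModel n)

theorem two_mul_cutWeight (W : Set G.V) :
    2 * G.cutWeight W = ∑ u : G.V, ∑ v : G.V, if u ∈ W ↔ v ∈ W then 0 else G.w u v := by
  have hswap : G.cutWeight W = ∑ u : G.V, ∑ v : G.V, if v ∈ W ∧ u ∉ W then G.w u v else 0 := by
    rw [cutWeight, Finset.sum_comm]
    simp only [G.symm]
  rw [two_mul]
  nth_rewrite 2 [hswap]
  rw [cutWeight, ← Finset.sum_add_distrib]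
  refine Finset.sum_congr rfl fun u _ => ?_
  rw [← Finset.sum_add_distrib]
  refine Finset.sum_congr rfl fun v _ => ?_
  by_cases hu : u ∈ W <;> by_cases hv : v ∈ W <;> simp [hu, hv]

theorem two_mul_sum_cutWeight {ι : Type*} [Fintype ι] (X : ι → Set G.V) :
    2 * ∑ i, G.cutWeight (X i) =
      ∑ u : G.V, ∑ v : G.V, (symmDiff {i | u ∈ X i} {i | v ∈ X i}).ncard * G.w u v := by
  simp only [Finset.mul_sum, two_mul_cutWeight]
  rw [Finset.sum_comm]
  refine Finset.sum_congr rfl fun u _ => ?_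
  rw [Finset.sum_comm]
  refine Finset.sum_congr rfl fun v _ => ?_
  have hset : symmDiff {i | u ∈ X i} {i | v ∈ X i} =
      ((Finset.univ.filter fun i => ¬(u ∈ X i ↔ v ∈ X i) : Finset ι) : Set ι) := by
    ext i
    by_cases hu : u ∈ X i <;> by_cases hv : v ∈ X i <;> simp [Set.mem_symmDiff, hu, hv]
  rw [hset, Set.ncard_coe_finset, ← nsmul_eq_mul, ← Finset.sum_const, Finset.sum_filter]
  refine Finset.sum_congr rfl fun i _ => ?_
  by_cases h : u ∈ X i ↔ v ∈ X i <;> simp [h]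

/-- The proof-by-contraction principle. -/
theorem sum_cutWeight_le_of_contraction {ι κ : Type*} [Fintype ι] [Fintype κ]
    {X : ι → Set G.V} {Y : κ → Set G.V}
    (h : ∀ u v, (symmDiff {j | u ∈ Y j} {j | v ∈ Y j}).ncard ≤
      (symmDiff {i | u ∈ X i} {i | v ∈ X i}).ncard) :
    ∑ j, G.cutWeight (Y j) ≤ ∑ i, G.cutWeight (X i) := by
  suffices 2 * ∑ j, G.cutWeight (Y j) ≤ 2 * ∑ i, G.cutWeight (X i) by linarith
  rw [two_mul_sum_cutWeight, two_mul_sum_cutWeight]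
  refine Finset.sum_le_sum fun u _ => Finset.sum_le_sum fun v _ => ?_
  exact mul_le_mul_of_nonneg_right (by exact_mod_cast h u v) (G.nonneg u v)

theorem cutWeight_nonneg (W : Set G.V) : 0 ≤ G.cutWeight W :=
  Finset.sum_nonneg fun u _ => Finset.sum_nonneg fun v _ => by
    split_ifs
    exacts [G.nonneg u v, le_rfl]

theorem isCut_iff {I : Finset (Fin n)} {W : Set G.V} :
    G.IsCut I W ↔ (∀ v i, G.color v = some (Fin.castSucc i) → (v ∈ W ↔ i ∈ I)) ∧
      ∀ v, G.color v = some (Fin.last n) → v ∉ W := by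
  constructor
  · refine fun h => ⟨fun v i hv => by simpa using h v _ hv, fun v hv => ?_⟩
    rw [h v _ hv]
    rintro ⟨i, -, hi⟩
    exact Fin.castSucc_ne_last i hi
  · rintro ⟨h1, h2⟩ v c hc
    induction c using Fin.lastCases with
    | last =>
      refine iff_of_false (h2 v hc) ?_
      rintro ⟨i, -, hi⟩
      exact Fin.castSucc_ne_last i hi
    | cast i => simpa using h1 v i hc

theorem exists_isCut (I : Finset (Fin n)) : ∃ W, G.IsCut I W := by
  refine ⟨{v | ∃ i ∈ I, G.color v = some (Fin.castSucc i)}, fun v c hc => ?_⟩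
  simp [hc, eq_comm]

theorem exists_cutWeight_eq_entropy (I : Finset (Fin n)) :
    ∃ W, G.IsCut I W ∧ G.cutWeight W = G.entropy I := by
  have hne : (G.cutWeight '' {W | G.IsCut I W}).Nonempty := by
    obtain ⟨W, hW⟩ := G.exists_isCut I
    exact ⟨_, W, hW, rfl⟩
  exact hne.csInf_mem (Set.toFinite _)

theorem entropy_le_cutWeight {I : Finset (Fin n)} {W : Set G.V} (hW : G.IsCut I W) :
    G.entropy I ≤ G.cutWeight W :=
  csInf_le (Set.toFinite _).bddBelow ⟨W, hW, rfl⟩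

theorem entropy_nonneg (I : Finset (Fin n)) : 0 ≤ G.entropy I := by
  obtain ⟨W, -, hW⟩ := G.exists_cutWeight_eq_entropy I
  exact hW ▸ G.cutWeight_nonneg W

theorem cutWeight_inter_add_union_le (W W' : Set G.V) :
    G.cutWeight (W ∩ W') + G.cutWeight (W ∪ W') ≤ G.cutWeight W + G.cutWeight W' := by
  simp only [cutWeight, ← Finset.sum_add_distrib]
  refine Finset.sum_le_sum fun u _ => Finset.sum_le_sum fun v _ => ?_
  have := G.nonneg u v
  by_cases h1 : u ∈ W <;> by_cases h2 : u ∈ W' <;> by_cases h3 : v ∈ W <;>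
    by_cases h4 : v ∈ W' <;> simp [h1, h2, h3, h4, this]

theorem cutWeight_compl (W : Set G.V) : G.cutWeight Wᶜ = G.cutWeight W := by
  have h1 := G.two_mul_cutWeight W
  have h2 := G.two_mul_cutWeight Wᶜ
  simp only [Set.mem_compl_iff, not_iff_not] at h2
  linarith

theorem cutWeight_diff_add_diff_le (W W' : Set G.V) :
    G.cutWeight (W \ W') + G.cutWeight (W' \ W) ≤ G.cutWeight W + G.cutWeight W' := by
  have h := G.cutWeight_inter_add_union_le W W'ᶜ
  rw [G.cutWeight_compl W', ← G.cutWeight_compl (W ∪ W'ᶜ), Set.compl_union, compl_compl,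
    Set.inter_comm Wᶜ] at h
  exact h

theorem entropy_inter_add_union_le (I J : Finset (Fin n)) :
    G.entropy (I ∩ J) + G.entropy (I ∪ J) ≤ G.entropy I + G.entropy J := by
  obtain ⟨W, hW, hWI⟩ := G.exists_cutWeight_eq_entropy I
  obtain ⟨W', hW', hWJ⟩ := G.exists_cutWeight_eq_entropy J
  rw [← hWI, ← hWJ]
  rw [isCut_iff] at hW hW'
  refine le_trans (add_le_add (G.entropy_le_cutWeight ?_) (G.entropy_le_cutWeight ?_))
    (G.cutWeight_inter_add_union_le W W') <;>
  · refine G.isCut_iff.2 ⟨fun v i hv => ?_, fun v hv => ?_⟩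
    · simp [hW.1 v i hv, hW'.1 v i hv]
    · simp [hW.2 v hv, hW'.2 v hv]

theorem entropy_sdiff_add_sdiff_le (I J : Finset (Fin n)) :
    G.entropy (I \ J) + G.entropy (J \ I) ≤ G.entropy I + G.entropy J := by
  obtain ⟨W, hW, hWI⟩ := G.exists_cutWeight_eq_entropy I
  obtain ⟨W', hW', hWJ⟩ := G.exists_cutWeight_eq_entropy J
  rw [← hWI, ← hWJ]
  rw [isCut_iff] at hW hW'
  refine le_trans (add_le_add (G.entropy_le_cutWeight ?_) (G.entropy_le_cutWeight ?_))
    (G.cutWeight_diff_add_diff_le W W') <;>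
  · refine G.isCut_iff.2 ⟨fun v i hv => ?_, fun v hv => ?_⟩
    · simp [hW.1 v i hv, hW'.1 v i hv]
    · simp [hW.2 v hv, hW'.2 v hv]

/-- The cyclic inequality for regions grouped into `2k + 1` cyclically ordered blocks, the block
of the region `c` being `g c`. -/
theorem sum_entropy_arc_add_entropy_univ_le (k : ℕ) (g : Fin n → ZMod (2 * k + 1)) :
    ∑ i, G.entropy (Finset.univ.filter fun c => (g c - i).val < k) + G.entropy Finset.univ ≤
      ∑ i, G.entropy (Finset.univ.filter fun c => (g c - i).val < k + 1) := by
  choose X hX hXw using fun i : ZMod (2 * k + 1) =>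
    G.exists_cutWeight_eq_entropy (Finset.univ.filter fun c => (g c - i).val < k + 1)
  simp only [isCut_iff, Finset.mem_filter, Finset.mem_univ, true_and] at hX
  let Y : Option (ZMod (2 * k + 1)) → Set G.V :=
    fun o => {v | o ∈ evenGapsOption (k : ZMod (2 * k + 1)) {i | v ∈ X i}}
  have hin : ∀ v c, G.color v = some (Fin.castSucc c) →
      {i | v ∈ X i} = {i | (g c - i).val < k + 1} := by
    intro v c hv
    ext i
    exact (hX i).1 v c hv
  have hout : ∀ v, G.color v = some (Fin.last n) → {i | v ∈ X i} = ∅ := by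
    intro v hv
    ext i
    simpa using (hX i).2 v hv
  have hcontr : ∑ o, G.cutWeight (Y o) ≤ ∑ i, G.cutWeight (X i) :=
    G.sum_cutWeight_le_of_contraction fun u v =>
      ncard_symmDiff_le_of_insert (ncard_symmDiff_evenGapsOption_insert
        exists_pos_nsmul_natCast_eq fun _ => odd_of_isGap_singleton_zero) _ _
  rw [Fintype.sum_option, add_comm] at hcontr
  simp only [← hXw]
  refine le_trans (add_le_add (Finset.sum_le_sum fun i _ => G.entropy_le_cutWeight ?_)
    (G.entropy_le_cutWeight ?_)) hcontr
  · refine G.isCut_iff.2 ⟨fun v c hv => ?_, fun v hv => ?_⟩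
    · simp only [Y, evenGapsOption, hin v c hv, Set.mem_ofPred_eq, Option.elim_some,
        mem_evenGaps_arc_iff, Finset.mem_filter, Finset.mem_univ, true_and]
    · simp only [Y, evenGapsOption, hout v hv, Set.mem_ofPred_eq, Option.elim_some,
        evenGaps_empty]
      exact id
  · refine G.isCut_iff.2 ⟨fun v c hv => ?_, fun v hv => ?_⟩
    · simp only [Y, evenGapsOption, hin v c hv, Set.mem_ofPred_eq, Option.elim_none,
        Finset.mem_univ, iff_true]
      exact ⟨g c, by simp⟩
    · simp [Y, evenGapsOption, hout v hv]

end GraphModel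

section CyclicArcs

theorem ZMod.val_sub_natCast {n : ℕ} [NeZero n] (y : ZMod n) {s : ℕ} (hs : s ≤ n) :
    (y - s).val = if s ≤ y.val then y.val - s else y.val + n - s := by
  have hlt := ZMod.val_lt y
  have h : y - s = ((y.val + (n - s) : ℕ) : ZMod n) := by
    rw [Nat.cast_add, ZMod.natCast_zmod_val, Nat.cast_sub hs, ZMod.natCast_self]
    ring
  rw [h, ZMod.val_natCast]
  split_ifs with hle
  · rw [show y.val + (n - s) = y.val - s + n by omega, Nat.add_mod_right,
      Nat.mod_eq_of_lt (by omega)]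
  · rw [Nat.mod_eq_of_lt (by omega)]
    omega

theorem ZMod.sum_val {n : ℕ} [NeZero n] (f : ℕ → ℝ) :
    ∑ x : ZMod n, f x.val = ∑ i ∈ Finset.range n, f i := by
  cases n with
  | zero => exact absurd rfl (NeZero.ne 0)
  | succ n => exact Fin.sum_univ_eq_sum_range f (n + 1)

variable {n : ℕ}

/-- The cyclic window of `m` regions starting at `x`, with `x` taken modulo `n`. -/
def cyclicArc (x : ZMod n) (m : ℕ) : Finset (Fin n) :=
  Finset.univ.filter fun c => (((c : ℕ) : ZMod n) - x).val < m

theorem cycWindow_eq_cyclicArc [NeZero n] (i : ℕ) {m : ℕ} (hm : m ≤ n) :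
    cycWindow n i m = cyclicArc (i : ZMod n) m := by
  ext c
  simp only [cycWindow, cyclicArc, Finset.mem_filter, Finset.mem_univ, true_and]
  constructor
  · rintro ⟨t, ht, h⟩
    have : ((c : ℕ) : ZMod n) - i = t := by
      rw [← h, ZMod.natCast_mod]
      push_cast
      ring
    rwa [this, ZMod.val_cast_of_lt (by omega)]
  · refine fun h => ⟨_, h, ?_⟩
    have : ((i + (((c : ℕ) : ZMod n) - i).val : ℕ) : ZMod n) = (c : ℕ) := by
      rw [Nat.cast_add, ZMod.natCast_zmod_val]
      ring
    rw [ZMod.natCast_eq_natCast_iff', Nat.mod_eq_of_lt c.2] at this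
    exact this

theorem cycC_eq_sum_cyclicArc [NeZero n] (S : Finset (Fin n) → ℝ) {m : ℕ} (hm : m ≤ n)
    (y : ZMod n) : cycC S m = ∑ x, S (cyclicArc (x + y) m) := by
  rw [show ∑ x, S (cyclicArc (x + y) m) = ∑ x, S (cyclicArc x m) from
    Equiv.sum_comp (Equiv.addRight y) fun x => S (cyclicArc x m), cycC,
    ← ZMod.sum_val fun i => S (cycWindow n i m)]
  refine Finset.sum_congr rfl fun x _ => ?_
  rw [cycWindow_eq_cyclicArc _ hm, ZMod.natCast_zmod_val]

theorem mem_cyclicArc_add_natCast [NeZero n] (x : ZMod n) {s : ℕ} (hs : s ≤ n) (m : ℕ)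
    (c : Fin n) : c ∈ cyclicArc (x + (s : ZMod n)) m ↔
      (if s ≤ (((c : ℕ) : ZMod n) - x).val then (((c : ℕ) : ZMod n) - x).val - s
        else (((c : ℕ) : ZMod n) - x).val + n - s) < m := by
  rw [← ZMod.val_sub_natCast _ hs, sub_sub]
  simp [cyclicArc]

variable (G : GraphModel n)

theorem cycC_entropy_concave [NeZero n] {m : ℕ} (hm : m + 1 < n) :
    cycC G.entropy (m + 2) - cycC G.entropy (m + 1) ≤
      cycC G.entropy (m + 1) - cycC G.entropy m := by
  have h : ∀ x : ZMod n, G.entropy (cyclicArc (x + (1 : ℕ)) m) +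
      G.entropy (cyclicArc (x + (0 : ℕ)) (m + 2)) ≤
      G.entropy (cyclicArc (x + (0 : ℕ)) (m + 1)) +
      G.entropy (cyclicArc (x + (1 : ℕ)) (m + 1)) := by
    intro x
    convert G.entropy_inter_add_union_le _ _ using 3 <;>
    · ext c
      have hc := ZMod.val_lt (((c : ℕ) : ZMod n) - x)
      simp only [Finset.mem_inter, Finset.mem_union,
        mem_cyclicArc_add_natCast x (show 1 ≤ n by omega),
        mem_cyclicArc_add_natCast x (show 0 ≤ n by omega)]
      split_ifs <;> omega
  have hsum := Finset.sum_le_sum fun x (_ : x ∈ Finset.univ) => h x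
  simp only [Finset.sum_add_distrib] at hsum
  rw [← cycC_eq_sum_cyclicArc _ (by omega), ← cycC_eq_sum_cyclicArc _ (by omega),
    ← cycC_eq_sum_cyclicArc _ (by omega), ← cycC_eq_sum_cyclicArc _ (by omega)] at hsum
  linarith

theorem cycC_entropy_add_le_compl [NeZero n] {k : ℕ} (hk : 2 * k + 1 ≤ n) :
    cycC G.entropy (k + 1) + cycC G.entropy k ≤
      cycC G.entropy (n - k) + cycC G.entropy (n - k - 1) := by
  have h : ∀ x : ZMod n, G.entropy (cyclicArc (x + k) (k + 1)) +
      G.entropy (cyclicArc (x + (0 : ℕ)) k) ≤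
      G.entropy (cyclicArc (x + k) (n - k)) +
      G.entropy (cyclicArc (x + (2 * k + 1 : ℕ)) (n - k - 1)) := by
    intro x
    convert G.entropy_sdiff_add_sdiff_le _ _ using 3 <;>
    · ext c
      have hc := ZMod.val_lt (((c : ℕ) : ZMod n) - x)
      simp only [Finset.mem_sdiff,
        mem_cyclicArc_add_natCast x (show k ≤ n by omega),
        mem_cyclicArc_add_natCast x hk,
        mem_cyclicArc_add_natCast x (show 0 ≤ n by omega)]
      split_ifs <;> omega
  have hsum := Finset.sum_le_sum fun x (_ : x ∈ Finset.univ) => h x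
  simp only [Finset.sum_add_distrib] at hsum
  rw [← cycC_eq_sum_cyclicArc _ (by omega), ← cycC_eq_sum_cyclicArc _ (by omega),
    ← cycC_eq_sum_cyclicArc _ (by omega), ← cycC_eq_sum_cyclicArc _ (by omega)] at hsum
  exact hsum

/-- The block of a region when the cycle of regions is cut at `s` into `2k` singletons followed by
one block holding all the remaining regions. -/
def cyclicBlock (k : ℕ) (s : ZMod n) (c : Fin n) : ZMod (2 * k + 1) :=
  (min (((c : ℕ) : ZMod n) - s).val (2 * k) : ℕ)

theorem filter_cyclicBlock_succ [NeZero n] {k : ℕ} (hk : 2 * k + 1 ≤ n) (s : ZMod n)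
    (i : ZMod (2 * k + 1)) :
    (Finset.univ.filter fun c => (cyclicBlock k s c - i).val < k + 1) =
      cyclicArc (s + (i.val : ZMod n)) (if i.val < k then k + 1 else n - k) := by
  ext c
  have hc := ZMod.val_lt (((c : ℕ) : ZMod n) - s)
  have hi := ZMod.val_lt i
  rw [mem_cyclicArc_add_natCast s (by omega), Finset.mem_filter, cyclicBlock]
  nth_rewrite 1 [← ZMod.natCast_zmod_val i]
  rw [ZMod.val_sub_natCast _ hi.le, ZMod.val_cast_of_lt (by omega)]
  simp only [Finset.mem_univ, true_and]
  split_ifs <;> omega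

theorem filter_cyclicBlock [NeZero n] {k : ℕ} (hk : 2 * k + 1 ≤ n) (s : ZMod n)
    (i : ZMod (2 * k + 1)) :
    (Finset.univ.filter fun c => (cyclicBlock k s c - i).val < k) =
      cyclicArc (s + (i.val : ZMod n)) (if i.val < k + 1 then k else n - k - 1) := by
  ext c
  have hc := ZMod.val_lt (((c : ℕ) : ZMod n) - s)
  have hi := ZMod.val_lt i
  rw [mem_cyclicArc_add_natCast s (by omega), Finset.mem_filter, cyclicBlock]
  nth_rewrite 1 [← ZMod.natCast_zmod_val i]
  rw [ZMod.val_sub_natCast _ hi.le, ZMod.val_cast_of_lt (by omega)]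
  simp only [Finset.mem_univ, true_and]
  split_ifs <;> omega

theorem sum_range_ite_lt (p q : ℕ) (f : ℕ → ℝ) (u v : ℕ) :
    ∑ i ∈ Finset.range (p + q), f (if i < p then u else v) = p * f u + q * f v := by
  rw [Finset.sum_range_add]
  congr 1
  · rw [Finset.sum_congr rfl fun i hi => by rw [if_pos (Finset.mem_range.1 hi)]]
    simp
  · simp

theorem cycC_entropy_block_le [NeZero n] {k : ℕ} (hk : 2 * k + 1 ≤ n) :
    (k + 1) * cycC G.entropy k + k * cycC G.entropy (n - k - 1) + n * G.entropy Finset.univ ≤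
      k * cycC G.entropy (k + 1) + (k + 1) * cycC G.entropy (n - k) := by
  have hsum := Finset.sum_le_sum fun s (_ : s ∈ (Finset.univ : Finset (ZMod n))) =>
    G.sum_entropy_arc_add_entropy_univ_le k (cyclicBlock k s)
  simp only [filter_cyclicBlock_succ hk, filter_cyclicBlock hk] at hsum
  rw [Finset.sum_add_distrib, Finset.sum_comm] at hsum
  nth_rewrite 2 [Finset.sum_comm] at hsum
  have hl : ∀ i : ZMod (2 * k + 1),
      ∑ s : ZMod n, G.entropy (cyclicArc (s + (i.val : ZMod n))
        (if i.val < k + 1 then k else n - k - 1)) =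
      cycC G.entropy (if i.val < k + 1 then k else n - k - 1) := fun i =>
    (cycC_eq_sum_cyclicArc _ (by split_ifs <;> omega) _).symm
  have hr : ∀ i : ZMod (2 * k + 1),
      ∑ s : ZMod n, G.entropy (cyclicArc (s + (i.val : ZMod n))
        (if i.val < k then k + 1 else n - k)) =
      cycC G.entropy (if i.val < k then k + 1 else n - k) := fun i =>
    (cycC_eq_sum_cyclicArc _ (by split_ifs <;> omega) _).symm
  simp only [hl, hr] at hsum
  rw [ZMod.sum_val fun i => cycC G.entropy (if i < k + 1 then k else n - k - 1),
    ZMod.sum_val fun i => cycC G.entropy (if i < k then k + 1 else n - k),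
    show 2 * k + 1 = k + 1 + k by ring, sum_range_ite_lt (k + 1) k,
    show k + 1 + k = k + (k + 1) by ring, sum_range_ite_lt k (k + 1)] at hsum
  simpa [ZMod.card] using hsum

end CyclicArcs

section Concave

variable {D : ℕ → ℝ} {n : ℕ}

theorem slope_antitone (hD : ∀ m, m + 1 < n → D (m + 2) - D (m + 1) ≤ D (m + 1) - D m)
    {i j : ℕ} (hij : i ≤ j) (hj : j < n) : D (j + 1) - D j ≤ D (i + 1) - D i := by
  induction j, hij using Nat.le_induction with
  | base => exact le_rfl
  | succ j _ ih => exact (hD j hj).trans (ih (by omega))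

theorem sub_le_mul_slope (hD : ∀ m, m + 1 < n → D (m + 2) - D (m + 1) ≤ D (m + 1) - D m)
    {i : ℕ} (d : ℕ) (hd : i + d ≤ n) : D (i + d) - D i ≤ d * (D (i + 1) - D i) := by
  induction d with
  | zero => simp
  | succ d ih =>
    have h1 := ih (by omega)
    have h2 := slope_antitone hD (show i ≤ i + d by omega) (by omega)
    rw [← add_assoc]
    push_cast
    linarith

theorem min_le_of_concave (hD : ∀ m, m + 1 < n → D (m + 2) - D (m + 1) ≤ D (m + 1) - D m)
    {i a j : ℕ} (hia : i ≤ a) (haj : a ≤ j) (hj : j ≤ n) : min (D i) (D j) ≤ D a := by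
  rcases haj.eq_or_lt with rfl | hlt
  · exact min_le_right _ _
  rcases le_total 0 (D (a + 1) - D a) with h | h
  · refine (min_le_left _ _).trans ?_
    have : ∀ m, i ≤ m → m ≤ a → D i ≤ D m := by
      intro m hm
      induction m, hm using Nat.le_induction with
      | base => exact fun _ => le_rfl
      | succ m _ ih =>
        intro hma
        have h1 := ih (by omega)
        have h2 := slope_antitone hD (show m ≤ a by omega) (by omega)
        linarith
    exact this a hia le_rfl
  · refine (min_le_right _ _).trans ?_
    have : ∀ d, a + d ≤ n → D (a + d) ≤ D a := by
      intro d hd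
      have h1 := sub_le_mul_slope hD d hd
      have h2 := mul_nonpos_of_nonneg_of_nonpos (Nat.cast_nonneg (α := ℝ) d) h
      linarith
    obtain ⟨d, rfl⟩ := Nat.exists_eq_add_of_le haj
    exact this d hj

end Concave

/-- The cyclic family of holographic entropy inequalities: for
`n ≥ 2`, `a > b ≥ 0` and `a + b ≤ n`, every graph model on `n` regions satisfies
`C_n(a) − C_n(b) ≥ S*({1,…,n})`. -/
theorem stmt12 (n : ℕ) (hn : 2 ≤ n) (a b : ℕ) (hab : b < a) (hsum : a + b ≤ n)
    (G : GraphModel n) :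
    cycC G.entropy a - cycC G.entropy b ≥ G.entropy Finset.univ := by
  have : NeZero n := ⟨by omega⟩
  have hb : 2 * b + 1 ≤ n := by omega
  have hbR : 2 * (b : ℝ) + 1 ≤ n := by exact_mod_cast hb
  have hb0 : 0 ≤ (b : ℝ) := Nat.cast_nonneg b
  have hS := G.entropy_nonneg Finset.univ
  have hD : ∀ m, m + 1 < n → cycC G.entropy (m + 2) - cycC G.entropy (m + 1) ≤
      cycC G.entropy (m + 1) - cycC G.entropy m := fun m hm => cycC_entropy_concave G hm
  have hblock := cycC_entropy_block_le G hb
  have hcompl := cycC_entropy_add_le_compl G hb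
  have hlong : G.entropy Finset.univ ≤ cycC G.entropy (n - b) - cycC G.entropy b := by
    have h1 := mul_le_mul_of_nonneg_left hcompl hb0
    have h2 := mul_le_mul_of_nonneg_right hbR hS
    refine le_of_mul_le_mul_left (a := 2 * (b : ℝ) + 1) ?_ (by positivity)
    linarith
  have hshort : G.entropy Finset.univ ≤ cycC G.entropy (b + 1) - cycC G.entropy b := by
    have h1 := sub_le_mul_slope hD (n - 2 * b) (show b + (n - 2 * b) ≤ n by omega)
    rw [show b + (n - 2 * b) = n - b by omega, Nat.cast_sub (by omega)] at h1
    have h2 := slope_antitone hD (show b ≤ n - b - 1 by omega) (by omega)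
    rw [show n - b - 1 + 1 = n - b by omega] at h2
    have h3 := mul_le_mul_of_nonneg_left h2 hb0
    push_cast at h1
    refine le_of_mul_le_mul_left (a := (n : ℝ)) ?_ (by linarith)
    linarith
  have hmin := min_le_of_concave hD (show b + 1 ≤ a by omega) (show a ≤ n - b by omega)
    (Nat.sub_le n b)
  have := le_min (show G.entropy Finset.univ + cycC G.entropy b ≤ cycC G.entropy (b + 1) by
    linarith) (show _ ≤ cycC G.entropy (n - b) by linarith)
  linarith
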